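/- Canonical forms are T-optimal: if U is the product of a canonical form of T-count n, then every word w over the alphabet {H, S, T} whose product of letters equals U contains at least n occurrences of the letter T. -/

import Mathlib

open Matrix Complex

noncomputable section

/-- ω = exp(2πi/3), a primitive third root of unity. -/
def ω : ℂ := exp (2 * Real.pi * I / 3)

/-- ζ = exp(2πi/9), a primitive ninth root of unity. -/
def ζ : ℂ := exp (2 * Real.pi * I / 9)

/-- The qutrit Pauli X matrix. -/
def Xmat : Matrix (Fin 3) (Fin 3) ℂ := !![0,0,1; 1,0,0; 0,1,0]

/-- The qutrit Pauli Z matrix. -/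
def Zmat : Matrix (Fin 3) (Fin 3) ℂ := !![1,0,0; 0,ω,0; 0,0,ω^2]

/-- The qutrit Hadamard matrix H = (1/(i√3))·[[1,1,1],[1,ω,ω²],[1,ω²,ω]]. -/
def Hmat : Matrix (Fin 3) (Fin 3) ℂ :=
  (I * (Real.sqrt 3 : ℂ))⁻¹ • !![1,1,1; 1,ω,ω^2; 1,ω^2,ω]

/-- The qutrit phase matrix S = ζ⁸·diag(1,1,ω). -/
def Smat : Matrix (Fin 3) (Fin 3) ℂ := ζ^8 • !![1,0,0; 0,1,0; 0,0,ω]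

/-- The qutrit T matrix T = diag(1,ζ,ζ⁸). -/
def Tmat : Matrix (Fin 3) (Fin 3) ℂ := !![1,0,0; 0,ζ,0; 0,0,ζ^8]

lemma omega_ne_zero : ω ≠ 0 := Complex.exp_ne_zero _
lemma zeta_ne_zero : ζ ≠ 0 := Complex.exp_ne_zero _

lemma omega_im_pos : 0 < ω.im := by
  have h : ω = Complex.exp ((2 * Real.pi / 3 : ℝ) * I) := by
    rw [ω]; push_cast; ring_nf
  rw [h, Complex.exp_ofReal_mul_I_im]
  apply Real.sin_pos_of_pos_of_lt_pi
  · positivity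
  · nlinarith [Real.pi_pos]

lemma omega_ne_one : ω ≠ 1 := by
  intro h
  have := omega_im_pos
  rw [h] at this
  simp at this

lemma omega_cube : ω ^ 3 = 1 := by
  rw [ω, ← Complex.exp_nat_mul]
  rw [show (3:ℕ) * (2 * Real.pi * I / 3) = 2 * Real.pi * I by push_cast; ring]
  exact Complex.exp_two_pi_mul_I

lemma detX : Xmat.det ≠ 0 := by
  simp [Xmat, Matrix.det_fin_three]

lemma detZ : Zmat.det ≠ 0 := by
  simp [Zmat, Matrix.det_fin_three, omega_ne_zero]

lemma detS : Smat.det ≠ 0 := by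
  simp [Smat, Matrix.det_fin_three, omega_ne_zero, zeta_ne_zero]

lemma detT : Tmat.det ≠ 0 := by
  simp [Tmat, Matrix.det_fin_three, zeta_ne_zero]

lemma detH : Hmat.det ≠ 0 := by
  rw [Hmat, Matrix.det_smul]
  apply mul_ne_zero
  · apply pow_ne_zero
    apply inv_ne_zero
    apply mul_ne_zero Complex.I_ne_zero
    simp [Complex.ofReal_ne_zero]
  · rw [Matrix.det_fin_three]
    simp [Matrix.vecHead, Matrix.vecTail]
    intro h
    have h3 : ω ^ 3 = 1 := omega_cube
    have key : 3 * ω * (ω - 1) = 0 := by linear_combination h + ω * h3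
    rcases mul_eq_zero.mp key with h' | h'
    · rcases mul_eq_zero.mp h' with h'' | h''
      · norm_num at h''
      · exact omega_ne_zero h''
    · exact omega_ne_one (by linear_combination h')

/-- X as an element of GL(3, ℂ). -/
def Xg : GL (Fin 3) ℂ := Matrix.GeneralLinearGroup.mkOfDetNeZero Xmat detX

/-- Z as an element of GL(3, ℂ). -/
def Zg : GL (Fin 3) ℂ := Matrix.GeneralLinearGroup.mkOfDetNeZero Zmat detZ

/-- H as an element of GL(3, ℂ). -/
def Hg : GL (Fin 3) ℂ := Matrix.GeneralLinearGroup.mkOfDetNeZero Hmat detH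

/-- S as an element of GL(3, ℂ). -/
def Sg : GL (Fin 3) ℂ := Matrix.GeneralLinearGroup.mkOfDetNeZero Smat detS

/-- T as an element of GL(3, ℂ). -/
def Tg : GL (Fin 3) ℂ := Matrix.GeneralLinearGroup.mkOfDetNeZero Tmat detT

/-- The Clifford group 𝒞: the subgroup of GL(3,ℂ) generated by H and S. -/
def Cliff : Subgroup (GL (Fin 3) ℂ) := Subgroup.closure {Hg, Sg}

/-- The Clifford+T group: the subgroup of GL(3,ℂ) generated by H, S and T. -/
def CliffT : Subgroup (GL (Fin 3) ℂ) := Subgroup.closure {Hg, Sg, Tg}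

/-- The subgroup 𝒮 of GL(3,ℂ) generated by S and X. -/
def Sgrp : Subgroup (GL (Fin 3) ℂ) := Subgroup.closure {Sg, Xg}

/-- Letters of words over the alphabet {H, S, T}. -/
inductive Letter : Type
  | H : Letter
  | S : Letter
  | T : Letter
  deriving DecidableEq

/-- The gate associated to a letter. -/
def Letter.g : Letter → GL (Fin 3) ℂ
  | .H => Hg
  | .S => Sg
  | .T => Tg

/-- The product of the letters of a word. -/
def wordProd (w : List Letter) : GL (Fin 3) ℂ := (w.map Letter.g).prod

/-- The allowed prefixes of a canonical form: ε, T, H²T. -/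
def Prefixes : Set (List Letter) := {[], [.T], [.H, .H, .T]}

/-- The allowed syllables of a canonical form: HT, H³T, SHT, SH³T, S²HT, S²H³T. -/
def Syllables : Set (List Letter) :=
  {[.H, .T], [.H, .H, .H, .T], [.S, .H, .T],
   [.S, .H, .H, .H, .T], [.S, .S, .H, .T], [.S, .S, .H, .H, .H, .T]}

/-- The T-count of a canonical form with prefix `p` and syllable list `ss`:
`k` if the prefix is empty and `k+1` otherwise, where `k` is the number of syllables. -/
def TCount (p : List Letter) (ss : List (List Letter)) : ℕ :=
  ss.length + (if p = [] then 0 else 1)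

/-- P₊ = (P + P²)/√6. -/
def Pplus (P : Matrix (Fin 3) (Fin 3) ℂ) : Matrix (Fin 3) (Fin 3) ℂ :=
  ((Real.sqrt 6 : ℂ))⁻¹ • (P + P ^ 2)

/-- P₋ = i(P − P²)/√6. -/
def Pminus (P : Matrix (Fin 3) (Fin 3) ℂ) : Matrix (Fin 3) (Fin 3) ℂ :=
  (I * ((Real.sqrt 6 : ℂ))⁻¹) • (P - P ^ 2)

/-- The ordered tuple (Q₁, …, Q₈) = (Z₊, X₊, (XZ)₊, (XZ²)₊, Z₋, X₋, (XZ)₋, (XZ²)₋). -/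
def Q : Fin 8 → Matrix (Fin 3) (Fin 3) ℂ :=
  ![Pplus Zmat, Pplus Xmat, Pplus (Xmat * Zmat), Pplus (Xmat * Zmat ^ 2),
    Pminus Zmat, Pminus Xmat, Pminus (Xmat * Zmat), Pminus (Xmat * Zmat ^ 2)]

/-- The adjoint representation Û of U, the 8×8 real matrix with
entries Û_{ij} = tr(Qᵢ U Qⱼ U†). -/
def adj (U : Matrix (Fin 3) (Fin 3) ℂ) : Matrix (Fin 8) (Fin 8) ℝ :=
  Matrix.of fun i j => (Matrix.trace (Q i * U * Q j * Uᴴ)).re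

/-- The top-left 4×4 quadrant Û₊₊. -/
def blockPP (A : Matrix (Fin 8) (Fin 8) ℝ) : Matrix (Fin 4) (Fin 4) ℝ :=
  Matrix.of fun i j => A ⟨i.val, by omega⟩ ⟨j.val, by omega⟩

/-- The top-right 4×4 quadrant Û₊₋. -/
def blockPM (A : Matrix (Fin 8) (Fin 8) ℝ) : Matrix (Fin 4) (Fin 4) ℝ :=
  Matrix.of fun i j => A ⟨i.val, by omega⟩ ⟨j.val + 4, by omega⟩

/-- The bottom-left 4×4 quadrant Û₋₊. -/
def blockMP (A : Matrix (Fin 8) (Fin 8) ℝ) : Matrix (Fin 4) (Fin 4) ℝ :=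
  Matrix.of fun i j => A ⟨i.val + 4, by omega⟩ ⟨j.val, by omega⟩

/-- The bottom-right 4×4 quadrant Û₋₋. -/
def blockMM (A : Matrix (Fin 8) (Fin 8) ℝ) : Matrix (Fin 4) (Fin 4) ℝ :=
  Matrix.of fun i j => A ⟨i.val + 4, by omega⟩ ⟨j.val + 4, by omega⟩

/-- α = sin(2π/9). -/
def αR : ℝ := Real.sin (2 * Real.pi / 9)

/-- The ring ℤ[α]: the subring of ℝ generated by 1/2 and α. -/
def Zα : Subring ℝ := Subring.closure {1/2, αR}

/-- The ring ℤ[1/2, 1/α]: the subring of ℝ generated by 1/2, α and α⁻¹. -/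
def Zhα : Subring ℝ := Subring.closure {1/2, αR, αR⁻¹}

lemma alpha_mem_Zα : αR ∈ Zα := Subring.subset_closure (by simp)

/-!
Let `μ = ζ - 1`. The `ℤ[ζ]`-lattice spanned by `(1, 1, 1)`, `μ (0, 1, -1)` and `(ω - 1) (0, 0,
1)` is preserved by `H` and `S`, and `T` maps it into `μ⁻¹` times itself. Hence a word with `t`
letters `T` becomes integral in this basis after multiplication by `μ ^ t`, and if it has fewer
letters `T` than a canonical form with the same product up to a Clifford factor, then the
integral matrix of the canonical form vanishes modulo `μ`. The residue field is `𝔽₃`, where the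
row `(1, -1, 0)` is an eigenvector, of eigenvalue `±1`, of every syllable and lies in the row
space of every prefix, so that matrix does not vanish.
-/

lemma wordProd_nil : wordProd [] = 1 := rfl

lemma wordProd_cons (l : Letter) (w : List Letter) : wordProd (l :: w) = l.g * wordProd w :=
  List.prod_cons

lemma wordProd_append (v w : List Letter) : wordProd (v ++ w) = wordProd v * wordProd w := by
  simp only [wordProd, List.map_append, List.prod_append]

/-! ### Roots of unity -/

lemma isPrimitiveRoot_zeta : IsPrimitiveRoot ζ 9 :=
  Complex.isPrimitiveRoot_exp 9 (by norm_num)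

lemma zeta_pow_three : ζ ^ 3 = ω := by
  rw [ζ, ω, ← Complex.exp_nat_mul]
  congr 1
  push_cast
  ring

lemma omega_sq_add_omega_add_one : ω ^ 2 + ω + 1 = 0 := by
  have h : (ω - 1) * (ω ^ 2 + ω + 1) = 0 := by linear_combination omega_cube
  exact (mul_eq_zero.mp h).resolve_left (sub_ne_zero.mpr omega_ne_one)

lemma zeta_pow_six_add_zeta_pow_three_add_one : ζ ^ 6 + ζ ^ 3 + 1 = 0 := by
  linear_combination omega_sq_add_omega_add_one + (ζ ^ 3 + ω + 1) * zeta_pow_three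

lemma zeta_sub_one_ne_zero : ζ - 1 ≠ 0 :=
  sub_ne_zero.mpr (isPrimitiveRoot_zeta.ne_one (by norm_num))

lemma sq_I_mul_sqrt_three : (I * (Real.sqrt 3 : ℂ)) ^ 2 = -3 := by
  rw [mul_pow, I_sq, ← ofReal_pow, Real.sq_sqrt (by norm_num)]
  norm_num

lemma I_mul_sqrt_three_eq : I * (Real.sqrt 3 : ℂ) = 1 + 2 * ω := by
  have h_sq : (1 + 2 * ω) ^ 2 = (I * (Real.sqrt 3 : ℂ)) ^ 2 := by
    linear_combination 4 * omega_sq_add_omega_add_one - sq_I_mul_sqrt_three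
  rcases sq_eq_sq_iff_eq_or_eq_neg.mp h_sq with h | h
  · exact h.symm
  · have h_im : 2 * ω.im = -Real.sqrt 3 := by simpa using congrArg Complex.im h
    linarith [omega_im_pos, Real.sqrt_nonneg 3]

lemma exists_ringHom_adjoin_zmod_of_isPrimitiveRoot {K : Type*} [Field K] [CharZero K]
    {p k : ℕ} [Fact p.Prime] {x : K} (hx : IsPrimitiveRoot x (p ^ (k + 1))) :
    ∃ f : Algebra.adjoin ℤ {x} →+* ZMod p, f ⟨x, Algebra.self_mem_adjoin_singleton ℤ x⟩ = 1 := by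
  have hpos : 0 < p ^ (k + 1) := pow_pos (Fact.out : p.Prime).pos _
  let B := Algebra.adjoin.powerBasis' (hx.isIntegral hpos)
  have hgen : B.gen = ⟨x, Algebra.self_mem_adjoin_singleton ℤ x⟩ :=
    Algebra.adjoin.powerBasis'_gen _
  have hroot : Polynomial.aeval (1 : ZMod p) (minpoly ℤ B.gen) = 0 := by
    rw [← Algebra.adjoin.powerBasis'_minpoly_gen, ← Polynomial.cyclotomic_eq_minpoly hx hpos,
      Polynomial.aeval_def, Polynomial.eval₂_eq_eval_map, Polynomial.map_cyclotomic,
      Polynomial.eval_one_cyclotomic_prime_pow, CharP.cast_eq_zero]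
  exact ⟨(B.lift 1 hroot).toRingHom, by rw [← hgen]; exact B.lift_gen 1 hroot⟩

/-! ### The gates in a Clifford-invariant lattice -/

section Lattice

variable {R R' : Type*} [CommRing R] [CommRing R']

/-- The matrix whose columns are the basis of the invariant lattice. The parameter `z` stands for
`ζ`, so that the construction can be specialized to `ℤ[ζ]` and to its residue field. -/
def latticeBasis (z : R) : Matrix (Fin 3) (Fin 3) R :=
  !![1, 0, 0; 1, z - 1, 0; 1, 1 - z, z ^ 3 - 1]

/-- The gate of a letter in the basis `latticeBasis z`, multiplied by `z - 1` in the case of `T`.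
For `z = ζ` the factor `1 + z * (z - 1) * (z ^ 3 + 2)` is the unit `(z - 1) ^ 3 / (z ^ 3 - 1)`. -/
def latticeGate (z : R) : Letter → Matrix (Fin 3) (Fin 3) R
  | .H => !![z ^ 3 * (z ^ 3 - 1), 0, -z ^ 6;
             -z ^ 3 * (z ^ 2 + z + 1), 1, z ^ 3 * (z ^ 2 + z + 1);
             -2 * z ^ 3, 0, -z ^ 3 * (z ^ 3 - 1)]
  | .S => z ^ 8 • !![1, 0, 0; 0, 1, 0; 1, 1 - z, z ^ 3]
  | .T => !![z - 1, 0, 0;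
             z - 1, (z - 1) * z, 0;
             z ^ 8 * (1 + z * (z - 1) * (z ^ 3 + 2)),
               z ^ 8 * (z + 1) * (1 + z * (z - 1) * (z ^ 3 + 2)), (z - 1) * z ^ 8]

/-- The product of the letters of a word in the basis `latticeBasis z`, multiplied by the power of
`z - 1` whose exponent is the number of letters `T`. -/
def latticeProd (z : R) (w : List Letter) : Matrix (Fin 3) (Fin 3) R :=
  (w.map (latticeGate z)).prod

lemma latticeProd_nil (z : R) : latticeProd z [] = 1 := rfl

lemma latticeProd_cons (z : R) (l : Letter) (w : List Letter) :
    latticeProd z (l :: w) = latticeGate z l * latticeProd z w :=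
  List.prod_cons

lemma latticeProd_append (z : R) (v w : List Letter) :
    latticeProd z (v ++ w) = latticeProd z v * latticeProd z w := by
  simp only [latticeProd, List.map_append, List.prod_append]

lemma latticeGate_map (f : R →+* R') (z : R) (l : Letter) :
    (latticeGate z l).map f = latticeGate (f z) l := by
  cases l <;> ext i j <;> fin_cases i <;> fin_cases j <;> simp [latticeGate, map_ofNat f 2]

lemma latticeProd_map (f : R →+* R') (z : R) (w : List Letter) :
    (latticeProd z w).map f = latticeProd (f z) w := by
  induction w with
  | nil => exact Matrix.map_one f f.map_zero f.map_one
  | cons l w ih => rw [latticeProd_cons, latticeProd_cons, Matrix.map_mul, latticeGate_map, ih]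

lemma smul_latticeProd_map (f : R →+* R') (a z : R) (w : List Letter) :
    (a • latticeProd z w).map f = f a • latticeProd (f z) w := by
  rw [Matrix.map_smul' _ _ _ (map_mul f), latticeProd_map]

end Lattice

lemma isUnit_latticeBasis_zeta : IsUnit (latticeBasis ζ) := by
  have h_det : (latticeBasis ζ).det = (ζ - 1) * (ω - 1) := by
    rw [← zeta_pow_three]
    simp [latticeBasis, Matrix.det_fin_three]
  rw [Matrix.isUnit_iff_isUnit_det, h_det, isUnit_iff_ne_zero]
  exact mul_ne_zero zeta_sub_one_ne_zero (sub_ne_zero.mpr omega_ne_one)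

lemma Hmat_mul_latticeBasis : Hmat * latticeBasis ζ = latticeBasis ζ * latticeGate ζ .H := by
  have h_zeta := zeta_pow_six_add_zeta_pow_three_add_one
  have h_ne : I * (Real.sqrt 3 : ℂ) ≠ 0 := by simp
  rw [Hmat, Matrix.smul_mul, inv_smul_eq_iff₀ h_ne, I_mul_sqrt_three_eq, ← zeta_pow_three]
  ext i j
  fin_cases i <;> fin_cases j <;>
    simp [latticeBasis, latticeGate, Matrix.mul_apply, Fin.sum_univ_three] <;> grind

lemma Smat_mul_latticeBasis : Smat * latticeBasis ζ = latticeBasis ζ * latticeGate ζ .S := by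
  rw [Smat, latticeGate, Matrix.smul_mul, Matrix.mul_smul, ← zeta_pow_three]
  congr 1
  ext i j
  fin_cases i <;> fin_cases j <;>
    simp [latticeBasis, Matrix.mul_apply, Fin.sum_univ_three] <;> ring

lemma Tmat_mul_latticeBasis :
    (ζ - 1) • (Tmat * latticeBasis ζ) = latticeBasis ζ * latticeGate ζ .T := by
  have h_zeta := zeta_pow_six_add_zeta_pow_three_add_one
  ext i j
  fin_cases i <;> fin_cases j <;>
    simp [Tmat, latticeBasis, latticeGate, Matrix.mul_apply, Fin.sum_univ_three] <;> grind

lemma letter_mul_latticeBasis (l : Letter) :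
    (ζ - 1) ^ [l].count .T • ((l.g : Matrix (Fin 3) (Fin 3) ℂ) * latticeBasis ζ) =
      latticeBasis ζ * latticeGate ζ l := by
  cases l
  · rw [show [Letter.H].count .T = 0 from rfl, pow_zero, one_smul]
    exact Hmat_mul_latticeBasis
  · rw [show [Letter.S].count .T = 0 from rfl, pow_zero, one_smul]
    exact Smat_mul_latticeBasis
  · rw [List.count_singleton_self, pow_one]
    exact Tmat_mul_latticeBasis

lemma wordProd_mul_latticeBasis (w : List Letter) :
    (ζ - 1) ^ w.count .T • ((wordProd w : Matrix (Fin 3) (Fin 3) ℂ) * latticeBasis ζ) =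
      latticeBasis ζ * latticeProd ζ w := by
  induction w with
  | nil => simp [wordProd_nil, latticeProd_nil]
  | cons l w ih =>
    calc (ζ - 1) ^ (l :: w).count .T •
          ((wordProd (l :: w) : Matrix (Fin 3) (Fin 3) ℂ) * latticeBasis ζ)
        = (ζ - 1) ^ [l].count .T • ((l.g : Matrix (Fin 3) (Fin 3) ℂ) *
            ((ζ - 1) ^ w.count .T •
              ((wordProd w : Matrix (Fin 3) (Fin 3) ℂ) * latticeBasis ζ))) := by
          rw [← List.singleton_append, List.count_append, pow_add, mul_smul, List.singleton_append,
            wordProd_cons, Units.val_mul, Matrix.mul_smul, Matrix.mul_assoc]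
      _ = latticeBasis ζ * latticeProd ζ (l :: w) := by
          rw [ih, ← Matrix.mul_assoc, ← Matrix.smul_mul, letter_mul_latticeBasis,
            Matrix.mul_assoc, latticeProd_cons]

lemma latticeProd_zeta_eq_smul {v w : List Letter} (h : wordProd w = wordProd v)
    (hle : w.count .T ≤ v.count .T) :
    latticeProd ζ v = (ζ - 1) ^ (v.count .T - w.count .T) • latticeProd ζ w := by
  apply isUnit_latticeBasis_zeta.mul_left_cancel
  rw [Matrix.mul_smul, ← wordProd_mul_latticeBasis, ← wordProd_mul_latticeBasis, smul_smul,
    ← pow_add, Nat.sub_add_cancel hle, h]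

/-! ### Reduction modulo `ζ - 1` -/

lemma latticeProd_zmod_eq_smul {v w : List Letter} (h : wordProd w = wordProd v)
    (hle : w.count .T ≤ v.count .T) :
    latticeProd (1 : ZMod 3) v =
      (0 : ZMod 3) ^ (v.count .T - w.count .T) • latticeProd (1 : ZMod 3) w := by
  obtain ⟨f, hf⟩ := exists_ringHom_adjoin_zmod_of_isPrimitiveRoot (p := 3) (k := 1)
    isPrimitiveRoot_zeta
  let z : Algebra.adjoin ℤ {ζ} := ⟨ζ, Algebra.self_mem_adjoin_singleton ℤ ζ⟩
  let ι : Algebra.adjoin ℤ {ζ} →+* ℂ := (Algebra.adjoin ℤ {ζ}).val.toRingHom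
  let d := v.count .T - w.count .T
  have h_val : (latticeProd z v).map ι = ((z - 1) ^ d • latticeProd z w).map ι := by
    rw [latticeProd_map, smul_latticeProd_map, map_pow, map_sub, map_one]
    exact latticeProd_zeta_eq_smul h hle
  have h_int : latticeProd z v = (z - 1) ^ d • latticeProd z w :=
    Matrix.map_injective Subtype.val_injective h_val
  calc latticeProd 1 v = (latticeProd z v).map f := by rw [latticeProd_map, hf]
    _ = ((z - 1) ^ d • latticeProd z w).map f := by rw [h_int]
    _ = (0 : ZMod 3) ^ d • latticeProd 1 w := by
      rw [smul_latticeProd_map, map_pow, map_sub, map_one, hf, sub_self]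

lemma count_T_le_of_latticeProd_ne_zero {v w : List Letter}
    (hv : latticeProd (1 : ZMod 3) v ≠ 0) (h : wordProd w = wordProd v) :
    v.count .T ≤ w.count .T := by
  by_contra! hlt
  apply hv
  rw [latticeProd_zmod_eq_smul h hlt.le, zero_pow (Nat.sub_ne_zero_of_lt hlt), zero_smul]

/-- The functional on the residue lattice that every syllable preserves up to sign. -/
def syllableRow : Fin 3 → ZMod 3 := ![1, -1, 0]

lemma syllableRow_vecMul_latticeProd {s : List Letter} (hs : s ∈ Syllables) :
    syllableRow ᵥ* latticeProd 1 s = syllableRow ∨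
      syllableRow ᵥ* latticeProd 1 s = -syllableRow := by
  rcases hs with rfl | rfl | rfl | rfl | rfl | rfl <;> decide

lemma syllableRow_vecMul_latticeProd_flatten {ss : List (List Letter)}
    (hss : ∀ s ∈ ss, s ∈ Syllables) :
    syllableRow ᵥ* latticeProd 1 ss.flatten = syllableRow ∨
      syllableRow ᵥ* latticeProd 1 ss.flatten = -syllableRow := by
  induction ss with
  | nil => exact Or.inl (Matrix.vecMul_one _)
  | cons s ss ih =>
    obtain ⟨hs, hss⟩ := List.forall_mem_cons.mp hss
    rw [List.flatten_cons, latticeProd_append, ← Matrix.vecMul_vecMul]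
    rcases syllableRow_vecMul_latticeProd hs with h | h <;> rw [h]
    · exact ih hss
    · rw [Matrix.neg_vecMul, neg_inj, neg_eq_iff_eq_neg]
      exact (ih hss).symm

lemma exists_vecMul_latticeProd_of_mem_prefixes {p : List Letter} (hp : p ∈ Prefixes) :
    ∃ x : Fin 3 → ZMod 3, x ᵥ* latticeProd 1 p = syllableRow := by
  rcases hp with rfl | rfl | rfl
  · exact ⟨syllableRow, by decide⟩
  · exact ⟨![0, 0, 1], by decide⟩
  · exact ⟨![0, 0, -1], by decide⟩

lemma latticeProd_canonical_form_ne_zero {p : List Letter} {ss : List (List Letter)}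
    (hp : p ∈ Prefixes) (hss : ∀ s ∈ ss, s ∈ Syllables) :
    latticeProd (1 : ZMod 3) (p ++ ss.flatten) ≠ 0 := by
  intro h_zero
  obtain ⟨x, hx⟩ := exists_vecMul_latticeProd_of_mem_prefixes hp
  have h_row : syllableRow ᵥ* latticeProd 1 ss.flatten = 0 := by
    rw [← hx, Matrix.vecMul_vecMul, ← latticeProd_append, h_zero, Matrix.vecMul_zero]
  rcases syllableRow_vecMul_latticeProd_flatten hss with h | h <;>
    exact absurd (h.symm.trans h_row) (by decide)

/-! ### Words for Clifford elements and canonical forms -/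

lemma fourierMatrix_pow_four :
    (!![1, 1, 1; 1, ω, ω ^ 2; 1, ω ^ 2, ω] : Matrix (Fin 3) (Fin 3) ℂ) ^ 4 = (9 : ℂ) • 1 := by
  have h_sq : (!![1, 1, 1; 1, ω, ω ^ 2; 1, ω ^ 2, ω] : Matrix (Fin 3) (Fin 3) ℂ) ^ 2 =
      !![3, 0, 0; 0, 0, 3; 0, 3, 0] := by
    have h_omega := omega_sq_add_omega_add_one
    rw [pow_two]
    ext i j
    fin_cases i <;> fin_cases j <;> simp [Matrix.mul_apply, Fin.sum_univ_three] <;> grind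
  rw [show 4 = 2 * 2 from rfl, pow_mul, h_sq, pow_two]
  ext i j
  fin_cases i <;> fin_cases j <;> simp [Matrix.mul_apply, Fin.sum_univ_three] <;> norm_num

lemma Hg_pow_four : Hg ^ 4 = 1 := by
  have h_scalar : (I * (Real.sqrt 3 : ℂ)) ^ 4 = 9 := by
    linear_combination ((I * (Real.sqrt 3 : ℂ)) ^ 2 - 3) * sq_I_mul_sqrt_three
  apply Units.ext
  change Hmat ^ 4 = 1
  rw [Hmat, smul_pow, fourierMatrix_pow_four, inv_pow, h_scalar,
    inv_smul_smul₀ (by norm_num : (9 : ℂ) ≠ 0)]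

lemma Sg_pow_nine : Sg ^ 9 = 1 := by
  have h_diag : Smat = ζ ^ 8 • Matrix.diagonal ![1, 1, ω] := by
    rw [Smat]
    congr 1
    ext i j
    fin_cases i <;> fin_cases j <;> rfl
  have h_omega : ω ^ 9 = 1 := by rw [pow_mul ω 3 3, omega_cube, one_pow]
  apply Units.ext
  change Smat ^ 9 = 1
  rw [h_diag, smul_pow, pow_right_comm, isPrimitiveRoot_zeta.pow_eq_one, one_pow, one_smul,
    Matrix.diagonal_pow, Matrix.diagonal_eq_one]
  ext i
  fin_cases i <;> simp [h_omega]

lemma exists_word_count_T_eq_zero_of_mem_cliff {c : GL (Fin 3) ℂ} (hc : c ∈ Cliff) :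
    ∃ w : List Letter, w.count .T = 0 ∧ wordProd w = c := by
  have h_fin : ∀ g ∈ ({Hg, Sg} : Set (GL (Fin 3) ℂ)), IsOfFinOrder g := by
    rintro g (rfl | rfl)
    · exact isOfFinOrder_iff_pow_eq_one.mpr ⟨4, by norm_num, Hg_pow_four⟩
    · exact isOfFinOrder_iff_pow_eq_one.mpr ⟨9, by norm_num, Sg_pow_nine⟩
  rw [Cliff, ← Subgroup.mem_toSubmonoid, Subgroup.closure_toSubmonoid_of_isOfFinOrder h_fin] at hc
  induction hc using Submonoid.closure_induction with
  | mem g hg =>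
    rcases hg with rfl | rfl
    · exact ⟨[.H], rfl, mul_one _⟩
    · exact ⟨[.S], rfl, mul_one _⟩
  | one => exact ⟨[], rfl, wordProd_nil⟩
  | mul g h _ _ hg hh =>
    obtain ⟨v, hv, rfl⟩ := hg
    obtain ⟨w, hw, rfl⟩ := hh
    exact ⟨v ++ w, by rw [List.count_append, hv, hw], wordProd_append v w⟩

lemma count_T_of_mem_syllables {s : List Letter} (hs : s ∈ Syllables) : s.count .T = 1 := by
  rcases hs with rfl | rfl | rfl | rfl | rfl | rfl <;> rfl

lemma count_T_of_mem_prefixes {p : List Letter} (hp : p ∈ Prefixes) :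
    p.count .T = if p = [] then 0 else 1 := by
  rcases hp with rfl | rfl | rfl <;> rfl

lemma count_T_canonical_form {p : List Letter} {ss : List (List Letter)}
    (hp : p ∈ Prefixes) (hss : ∀ s ∈ ss, s ∈ Syllables) :
    (p ++ ss.flatten).count .T = TCount p ss := by
  have h_flatten : ss.flatten.count .T = ss.length := by
    rw [List.count_flatten, List.map_congr_left fun s hs => count_T_of_mem_syllables (hss s hs),
      List.map_const', List.sum_replicate, smul_eq_mul, mul_one]
  rw [List.count_append, count_T_of_mem_prefixes hp, h_flatten, TCount, add_comm]

/-- Canonical forms are T-optimal: if U is the product of a canonical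
form of T-count n, then every word w over the alphabet {H, S, T} whose product of
letters equals U contains at least n occurrences of the letter T. -/
theorem canonical_forms_are_T_optimal
    (p : List Letter) (ss : List (List Letter)) (c : GL (Fin 3) ℂ)
    (hp : p ∈ Prefixes) (hss : ∀ s ∈ ss, s ∈ Syllables) (hc : c ∈ Cliff)
    (U : GL (Fin 3) ℂ) (hU : U = wordProd (p ++ ss.flatten) * c)
    (n : ℕ) (hn : n = TCount p ss) :
    ∀ w : List Letter, wordProd w = U → n ≤ w.count Letter.T := by
  intro w hw
  obtain ⟨v, hv, hvc⟩ := exists_word_count_T_eq_zero_of_mem_cliff (Cliff.inv_mem hc)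
  have h_prod : wordProd (w ++ v) = wordProd (p ++ ss.flatten) := by
    rw [wordProd_append, hw, hU, hvc, mul_inv_cancel_right]
  calc n = (p ++ ss.flatten).count .T := by rw [hn, count_T_canonical_form hp hss]
    _ ≤ (w ++ v).count .T :=
      count_T_le_of_latticeProd_ne_zero (latticeProd_canonical_form_ne_zero hp hss) h_prod
    _ = w.count .T := by rw [List.count_append, hv, add_zero]

end
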